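/- Let G be a 3-regular graph with n vertices and m = 3n/2 edges, and let ℐ' = (H, 𝒟, π) be the PCSF instance constructed from G. If G has a vertex cover of size k, then ℐ' has a solution of cost at most 2m + 2n + k. -/

import Mathlib

/-!
The complement of the vertex cover `C` is independent, so every edge `e_j` has at most one
endpoint outside `C`. The solution buys `{w, a_i}` for every `v_i ∉ C`, and connects each `b_j`
to `w` through `c^ℓ_j`, where `ℓ` is chosen so that `e_j^{(ℓ)} ∉ C` whenever such an endpoint exists.
The length is at most `2(n - k) + 2m`, every demand `{w, b_j}` is satisfied, and a demand
`{a_i, c^ℓ_j}` can fail only when `v_i ∈ C`. Each vertex of `C` lies on at most three edges, so the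
penalties amount to at most `3k`, and `2(n - k) + 2m + 3k = 2m + 2n + k`.
-/

open scoped Classical

noncomputable section

namespace PCSFHard

/-- The vertex set of the graph `H`: vertices `a_i` (`i < n`), `b_j`, `c¹_j`, `c²_j`
(`j < m`), and the central vertex `w`. -/
abbrev HVert (n m : ℕ) := Fin n ⊕ Fin m ⊕ Fin m ⊕ Fin m ⊕ Unit

variable {n m : ℕ}

def va (i : Fin n) : HVert n m := Sum.inl i
def vb (j : Fin m) : HVert n m := Sum.inr (Sum.inl j)
def vc1 (j : Fin m) : HVert n m := Sum.inr (Sum.inr (Sum.inl j))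
def vc2 (j : Fin m) : HVert n m := Sum.inr (Sum.inr (Sum.inr (Sum.inl j)))
def vw : HVert n m := Sum.inr (Sum.inr (Sum.inr (Sum.inr ())))

/-- The edges of `H`: `{w, a_i}`, `{w, c¹_j}`, `{w, c²_j}`, `{c¹_j, b_j}`, `{c²_j, b_j}`. -/
def rel (n m : ℕ) : HVert n m → HVert n m → Prop := fun x y =>
  (∃ i : Fin n, x = vw ∧ y = va i) ∨
  (∃ j : Fin m, x = vw ∧ y = vc1 j) ∨
  (∃ j : Fin m, x = vw ∧ y = vc2 j) ∨
  (∃ j : Fin m, x = vc1 j ∧ y = vb j) ∨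
  (∃ j : Fin m, x = vc2 j ∧ y = vb j)

/-- The graph `H` of the PCSF instance `ℐ'`. -/
def HG (n m : ℕ) : SimpleGraph (HVert n m) := SimpleGraph.fromRel (rel n m)

/-- Edge lengths of `H`: the edges `{w, a_i}` have length `2`, all other edges length `1`. -/
def elen (n m : ℕ) : Sym2 (HVert n m) → ℝ := fun e =>
  if ∃ i : Fin n, e = s(vw, va i) then 2 else 1

/-- Two vertices are connected in the subgraph `F`. -/
def Sat (F : (HG n m).Subgraph) (x y : HVert n m) : Prop :=
  F.spanningCoe.Reachable x y

/-- Total edge length of a subgraph of `H`. -/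
def hlength (F : (HG n m).Subgraph) : ℝ :=
  ∑ e ∈ (Set.toFinite F.edgeSet).toFinset, elen n m e

/-- The cost of a solution `F`: total edge length, plus penalty `3` for every
unconnected demand `{w, b_j}`, plus penalty `1` for every unconnected demand
`{a_i, c^ℓ_j}` with `v_i = e_j^{(ℓ)}`. -/
def hcost (ends : Fin m → Fin n × Fin n) (F : (HG n m).Subgraph) : ℝ :=
  hlength F
    + (∑ j : Fin m, if Sat F vw (vb j) then 0 else 3)
    + (∑ j : Fin m, if Sat F (va (ends j).1) (vc1 j) then 0 else 1)
    + (∑ j : Fin m, if Sat F (va (ends j).2) (vc2 j) then 0 else 1)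

end PCSFHard

open PCSFHard

/-- The vertex `c^ℓ_j` through which `b_j` is connected to `w`: the first one if the first
endpoint of `e_j` lies outside `C`, and the second one otherwise. -/
def chosen {n m : ℕ} (ends : Fin m → Fin n × Fin n) (C : Finset (Fin n)) (j : Fin m) : HVert n m :=
  if (ends j).1 ∈ C then vc2 j else vc1 j

/-- The edges of `H` bought by the solution built from the vertex cover `C`. -/
def bought {n m : ℕ} (ends : Fin m → Fin n × Fin n) (C : Finset (Fin n)) :
    Finset (Sym2 (HVert n m)) :=
  Cᶜ.image (fun i => s(vw, va i)) ∪
    (Finset.univ.image (fun j => s(vw, chosen ends C j)) ∪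
      Finset.univ.image (fun j => s(chosen ends C j, vb j)))

lemma elen_nonneg {n m : ℕ} (e : Sym2 (HVert n m)) : 0 ≤ elen n m e := by
  unfold elen; split_ifs <;> norm_num

lemma elen_le_two {n m : ℕ} (e : Sym2 (HVert n m)) : elen n m e ≤ 2 := by
  unfold elen; split_ifs <;> norm_num

lemma elen_w_chosen {n m : ℕ} (ends : Fin m → Fin n × Fin n) (C : Finset (Fin n)) (j : Fin m) :
    elen n m s(vw, chosen ends C j) = 1 := by
  unfold elen chosen
  rw [if_neg]
  rintro ⟨i, hi⟩
  split_ifs at hi <;> simp [vw, va, vc1, vc2] at hi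

lemma elen_chosen_b {n m : ℕ} (ends : Fin m → Fin n × Fin n) (C : Finset (Fin n)) (j : Fin m) :
    elen n m s(chosen ends C j, vb j) = 1 := by
  unfold elen chosen
  rw [if_neg]
  rintro ⟨i, hi⟩
  split_ifs at hi <;> simp [vw, va, vb, vc1, vc2] at hi

lemma sum_image_le_card {α β : Type*} [DecidableEq β] (s : Finset α) (f : α → β) (g : β → ℝ)
    (c : ℝ) (hc : 0 ≤ c) (h : ∀ a ∈ s, g (f a) ≤ c) :
    ∑ e ∈ s.image f, g e ≤ s.card * c := by
  calc ∑ e ∈ s.image f, g e ≤ (s.image f).card • c :=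
        Finset.sum_le_card_nsmul _ _ _ (by simpa using h)
    _ ≤ s.card * c := by
        rw [nsmul_eq_mul]
        have := Finset.card_image_le (s := s) (f := f)
        gcongr

lemma sum_union_le {β : Type*} [DecidableEq β] (s t : Finset β) (g : β → ℝ) (hg : ∀ e, 0 ≤ g e) :
    ∑ e ∈ s ∪ t, g e ≤ ∑ e ∈ s, g e + ∑ e ∈ t, g e := by
  rw [← Finset.sum_union_inter]
  have := Finset.sum_nonneg (s := s ∩ t) (fun e _ => hg e)
  linarith

lemma bought_length_le {n m : ℕ} (ends : Fin m → Fin n × Fin n) (C : Finset (Fin n)) :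
    ∑ e ∈ bought ends C, elen n m e ≤ 2 * ((n : ℝ) - C.card) + 2 * m := by
  have h1 := sum_image_le_card Cᶜ (fun i => s(vw, va i)) (elen n m) 2 (by norm_num)
    (fun _ _ => elen_le_two _)
  have h2 := sum_image_le_card Finset.univ (fun j => s(vw, chosen ends C j)) (elen n m) 1
    (by norm_num) (fun j _ => (elen_w_chosen ends C j).le)
  have h3 := sum_image_le_card Finset.univ (fun j => s(chosen ends C j, vb j)) (elen n m) 1
    (by norm_num) (fun j _ => (elen_chosen_b ends C j).le)
  have hcard : ((Cᶜ.card : ℕ) : ℝ) = n - C.card := by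
    rw [Finset.card_compl, Fintype.card_fin,
      Nat.cast_sub (by simpa using Finset.card_le_univ C)]
  rw [hcard] at h1
  simp only [Finset.card_univ, Fintype.card_fin] at h2 h3
  unfold bought
  refine (sum_union_le _ _ _ elen_nonneg).trans ?_
  have := sum_union_le (Finset.univ.image (fun j => s(vw, chosen ends C j)))
    (Finset.univ.image (fun j => s(chosen ends C j, vb j))) (elen n m) elen_nonneg
  linarith

lemma bought_le {n m : ℕ} (ends : Fin m → Fin n × Fin n) (C : Finset (Fin n)) :
    SimpleGraph.fromEdgeSet (bought ends C : Set (Sym2 (HVert n m))) ≤ HG n m := by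
  rw [SimpleGraph.fromEdgeSet_le]
  rintro e ⟨he, -⟩
  simp only [bought, Finset.coe_union, Finset.coe_image, Set.mem_union, Set.mem_image] at he
  rcases he with ⟨i, -, rfl⟩ | ⟨j, -, rfl⟩ | ⟨j, -, rfl⟩
  · rw [SimpleGraph.mem_edgeSet, HG, SimpleGraph.fromRel_adj]
    exact ⟨by simp [vw, va], Or.inl (Or.inl ⟨i, rfl, rfl⟩)⟩
  · rw [SimpleGraph.mem_edgeSet, HG, SimpleGraph.fromRel_adj]
    unfold chosen
    split_ifs
    · exact ⟨by simp [vw, vc2], Or.inl (Or.inr (Or.inr (Or.inl ⟨j, rfl, rfl⟩)))⟩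
    · exact ⟨by simp [vw, vc1], Or.inl (Or.inr (Or.inl ⟨j, rfl, rfl⟩))⟩
  · rw [SimpleGraph.mem_edgeSet, HG, SimpleGraph.fromRel_adj]
    unfold chosen
    split_ifs
    · exact ⟨by simp [vb, vc2], Or.inl (Or.inr (Or.inr (Or.inr (Or.inr ⟨j, rfl, rfl⟩))))⟩
    · exact ⟨by simp [vb, vc1], Or.inl (Or.inr (Or.inr (Or.inr (Or.inl ⟨j, rfl, rfl⟩))))⟩

/-- The solution built from the vertex cover `C`. -/
def sol {n m : ℕ} (ends : Fin m → Fin n × Fin n) (C : Finset (Fin n)) : (HG n m).Subgraph :=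
  SimpleGraph.toSubgraph _ (bought_le ends C)

lemma sat_of_mem {n m : ℕ} (ends : Fin m → Fin n × Fin n) (C : Finset (Fin n))
    {x y : HVert n m} (hxy : x ≠ y) (h : s(x, y) ∈ bought ends C) : Sat (sol ends C) x y := by
  refine SimpleGraph.Adj.reachable ?_
  change (SimpleGraph.fromEdgeSet (bought ends C : Set (Sym2 (HVert n m)))).Adj x y
  rw [SimpleGraph.fromEdgeSet_adj]
  exact ⟨h, hxy⟩

lemma sat_w_chosen {n m : ℕ} (ends : Fin m → Fin n × Fin n) (C : Finset (Fin n)) (j : Fin m) :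
    Sat (sol ends C) vw (chosen ends C j) := by
  refine sat_of_mem ends C ?_ ?_
  · unfold chosen; split_ifs <;> simp [vw, vc1, vc2]
  · exact Finset.mem_union_right _ (Finset.mem_union_left _
      (Finset.mem_image_of_mem _ (Finset.mem_univ j)))

lemma sat_w_b {n m : ℕ} (ends : Fin m → Fin n × Fin n) (C : Finset (Fin n)) (j : Fin m) :
    Sat (sol ends C) vw (vb j) := by
  refine SimpleGraph.Reachable.trans (sat_w_chosen ends C j) (sat_of_mem ends C ?_ ?_)
  · unfold chosen; split_ifs <;> simp [vb, vc1, vc2]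
  · exact Finset.mem_union_right _ (Finset.mem_union_right _
      (Finset.mem_image_of_mem _ (Finset.mem_univ j)))

lemma sat_a_chosen {n m : ℕ} (ends : Fin m → Fin n × Fin n) (C : Finset (Fin n))
    {i : Fin n} (hi : i ∉ C) (j : Fin m) : Sat (sol ends C) (va i) (chosen ends C j) := by
  refine SimpleGraph.Reachable.trans (SimpleGraph.Reachable.symm (sat_of_mem ends C ?_ ?_))
    (sat_w_chosen ends C j)
  · simp [vw, va]
  · exact Finset.mem_union_left _ (Finset.mem_image_of_mem _ (by simpa using hi))

lemma hlength_sol_le {n m : ℕ} (ends : Fin m → Fin n × Fin n) (C : Finset (Fin n)) :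
    hlength (sol ends C) ≤ 2 * ((n : ℝ) - C.card) + 2 * m := by
  refine le_trans ?_ (bought_length_le ends C)
  refine Finset.sum_le_sum_of_subset_of_nonneg ?_ (fun e _ _ => elen_nonneg e)
  intro e he
  rw [Set.Finite.mem_toFinset] at he
  induction e using Sym2.ind with
  | _ x y =>
    have h : (SimpleGraph.fromEdgeSet (bought ends C : Set (Sym2 (HVert n m)))).Adj x y := he
    rw [SimpleGraph.fromEdgeSet_adj] at h
    exact h.1

/-- Double counting of the pairs of a vertex of `C` and an edge at it. -/
lemma incidences_le {n m : ℕ} (G : SimpleGraph (Fin n)) [DecidableRel G.Adj]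
    (hreg : G.IsRegularOfDegree 3) (ends : Fin m → Fin n × Fin n)
    (hends : ∀ j, G.Adj (ends j).1 (ends j).2)
    (huniq : ∀ e ∈ G.edgeSet, ∃! j : Fin m, e = s((ends j).1, (ends j).2))
    (C : Finset (Fin n)) :
    (∑ j : Fin m, if (ends j).1 ∈ C then (1 : ℝ) else 0)
      + (∑ j : Fin m, if (ends j).2 ∈ C then (1 : ℝ) else 0) ≤ 3 * C.card := by
  have hdeg : ∀ i : Fin n,
      (Finset.univ.filter (fun j => (ends j).1 = i ∨ (ends j).2 = i)).card ≤ 3 := by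
    intro i
    rw [← hreg.degree_eq i, ← G.card_incidenceFinset_eq_degree i]
    refine Finset.card_le_card_of_injOn (fun j => s((ends j).1, (ends j).2)) ?_ ?_
    · intro j hj
      have hj' : (ends j).1 = i ∨ (ends j).2 = i := by simpa using hj
      simp only [Finset.mem_coe, SimpleGraph.mem_incidenceFinset]
      refine ⟨hends j, ?_⟩
      rw [Sym2.mem_iff]
      exact hj'.imp Eq.symm Eq.symm
    · intro j _ j' _ h
      exact (huniq _ (hends j)).unique rfl h
  have hswap : ∀ j : Fin m,
      (if (ends j).1 ∈ C then (1 : ℝ) else 0) + (if (ends j).2 ∈ C then (1 : ℝ) else 0)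
        = ∑ i ∈ C, if (ends j).1 = i ∨ (ends j).2 = i then (1 : ℝ) else 0 := by
    intro j
    have hne := (hends j).ne
    have : ∀ i, (if (ends j).1 = i ∨ (ends j).2 = i then (1 : ℝ) else 0)
        = (if (ends j).1 = i then 1 else 0) + (if (ends j).2 = i then 1 else 0) := by
      intro i
      by_cases h1 : (ends j).1 = i
      · have h2 : (ends j).2 ≠ i := fun h => hne (h1.trans h.symm)
        simp [h1, h2]
      · simp [h1]
    simp only [this, Finset.sum_add_distrib, Finset.sum_ite_eq]
  rw [← Finset.sum_add_distrib, Finset.sum_congr rfl (fun j _ => hswap j), Finset.sum_comm]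
  calc _ ≤ ∑ _i ∈ C, (3 : ℝ) := by
        refine Finset.sum_le_sum (fun i _ => ?_)
        rw [Finset.sum_boole]
        exact_mod_cast hdeg i
    _ = 3 * C.card := by rw [Finset.sum_const, nsmul_eq_mul, mul_comm]

/--
Let `G` be a 3-regular graph with `n` vertices and `m = 3n/2` edges
(its edges enumerated as `e_j = {(ends j).1, (ends j).2}`), and let `ℐ'` be the PCSF
instance constructed from `G`.  If `G` has a vertex cover of size `k`, then `ℐ'` has
a solution of cost at most `2m + 2n + k`.
-/
theorem stmt_8 {n m : ℕ} (hm : 2 * m = 3 * n)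
    (G : SimpleGraph (Fin n)) [DecidableRel G.Adj]
    (hreg : G.IsRegularOfDegree 3)
    (ends : Fin m → Fin n × Fin n)
    (hends : ∀ j, G.Adj (ends j).1 (ends j).2)
    (huniq : ∀ e ∈ G.edgeSet, ∃! j : Fin m, e = s((ends j).1, (ends j).2))
    (C : Finset (Fin n)) (hC : ∀ u v : Fin n, G.Adj u v → u ∈ C ∨ v ∈ C)
    (k : ℕ) (hk : C.card = k) :
    ∃ F : (HG n m).Subgraph,
      hcost ends F ≤ 2 * (m : ℝ) + 2 * (n : ℝ) + (k : ℝ) := by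
  subst hk
  refine ⟨sol ends C, ?_⟩
  have hl := hlength_sol_le ends C
  have hinc := incidences_le G hreg ends hends huniq C
  have hb : (∑ j : Fin m, if Sat (sol ends C) vw (vb j) then (0 : ℝ) else 3) = 0 :=
    Finset.sum_eq_zero (fun j _ => if_pos (sat_w_b ends C j))
  have h1 : (∑ j : Fin m, if Sat (sol ends C) (va (ends j).1) (vc1 j) then (0 : ℝ) else 1)
      ≤ ∑ j : Fin m, if (ends j).1 ∈ C then (1 : ℝ) else 0 := by
    refine Finset.sum_le_sum (fun j _ => ?_)
    by_cases h : (ends j).1 ∈ C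
    · rw [if_pos h]; split_ifs <;> norm_num
    · have hs := sat_a_chosen ends C h j
      rw [chosen, if_neg h] at hs
      rw [if_pos hs, if_neg h]
  have h2 : (∑ j : Fin m, if Sat (sol ends C) (va (ends j).2) (vc2 j) then (0 : ℝ) else 1)
      ≤ ∑ j : Fin m, if (ends j).2 ∈ C then (1 : ℝ) else 0 := by
    refine Finset.sum_le_sum (fun j _ => ?_)
    by_cases h : (ends j).2 ∈ C
    · rw [if_pos h]; split_ifs <;> norm_num
    · -- The cover property puts the first endpoint in `C`, so `c²_j` is the chosen vertex.
      have h' : (ends j).1 ∈ C := (hC _ _ (hends j)).resolve_right h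
      have hs := sat_a_chosen ends C h j
      rw [chosen, if_pos h'] at hs
      rw [if_pos hs, if_neg h]
  unfold hcost
  rw [hb]
  linarith
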